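/- Let α ≥ 2 be an even integer, N, s positive integers, z ∈ {1,…,N−1}^s, and let γ_u ≥ 0 be weights for each nonempty subset u ⊆ {1,…,s}. Set γ''_u = γ_u·(3/(2^{2α+1}π^{2α}))^{|u|}. Then the quantity S := Σ_{∅≠u⊆{1,…,s}} γ_u · (1/N²) · Σ_{n=0}^{N−1} Σ_{m=0}^{N−1} Π_{j∈u} [ −1 + sym[K_α]( {n z_j/N}, {m z_j/N} ) ] (which equals the squared worst-case QMC integration error of the symmetrized rank-1 lattice rule in the weighted Sobolev space H(K^{sob,odd+α}_{α,γ,s})) satisfies S ≤ Σ_{∅≠u⊆{1,…,s}} γ''_u · ( Σ_{k∈P^{⊥,u}_{N,z}} Π_{j∈u} 1/k_j^α )² ≤ ( Σ_{∅≠u⊆{1,…,s}} (γ''_u)^{1/2} · Σ_{k∈P^{⊥,u}_{N,z}} Π_{j∈u} 1/k_j^α )². -/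

import Mathlib

/-!
For even `α` the symmetrized kernel has a Fourier cosine expansion with nonnegative coefficients:
symmetrization removes the odd Bernoulli polynomials, and `symf_Ksob_eq` gives
`-1 + sym[K_α](x, y) = (2π)^{-2α} ∑_{k, l ≠ 0} w(k, l) cos(2πkx) cos(2πly) / (k l)^α`,
where `w(k, l) = 3/2` if `|k| = |l|` and `w(k, l) = 1` otherwise. Replacing every `w(k, l)` by `3/2`
gives the majorant `(3/2) (2π)^{-2α} G(x) G(y)` with `G(x) = ∑_{k ≠ 0} exp(2πikx) / k^α`.

The comparison is made in the closed cone `PosType` of functions on pairs of lattice indices that is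
generated by products of cosines. This cone is stable under products, so that a coefficientwise
comparison of the factors gives one of the products over `j ∈ u` (`PosType.prod_sub_prod`), and the
sum over all index pairs is nonnegative on it (`PosType.sum_nonneg`). After the comparison the
double sum factors as the square of the lattice average of `∏_{j ∈ u} G(x_j)`. By orthogonality of
characters that average lies between `0` and the dual lattice sum (`average_mem_Icc`); this is done
on finite truncations of the series, followed by a passage to the limit.

The second inequality is `∑ a_u² ≤ (∑ a_u)²` for nonnegative `a_u`.
-/

open Real

/-- The Bernoulli polynomial `B_n` evaluated at a real `x`. -/
noncomputable def bern (n : ℕ) (x : ℝ) : ℝ := Polynomial.aeval x (Polynomial.bernoulli n)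

/-- For even `α`, the kernel
`K_α(x,y) = 1 + Σ_{τ odd, 1≤τ≤α−1} B_τ(x)B_τ(y)/(τ!)² + B_α(x)B_α(y)/(α!)² − B_{2α}(|x−y|)/(2α)!`. -/
noncomputable def Ksob (α : ℕ) (x y : ℝ) : ℝ :=
  1 + (∑ τ ∈ (Finset.Icc 1 (α - 1)).filter (fun τ => Odd τ),
        bern τ x * bern τ y / ((Nat.factorial τ : ℝ)) ^ 2)
    + bern α x * bern α y / ((Nat.factorial α : ℝ)) ^ 2
    - bern (2 * α) |x - y| / ((Nat.factorial (2 * α) : ℝ))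

/-- Symmetrization `sym[f](x,y) = (f(x,y)+f(1−x,y)+f(x,1−y)+f(1−x,1−y))/4`. -/
noncomputable def symf (f : ℝ → ℝ → ℝ) (x y : ℝ) : ℝ :=
  (f x y + f (1 - x) y + f x (1 - y) + f (1 - x) (1 - y)) / 4

/-- The sum `Σ_{k ∈ P^{⊥,u}_{N,z}} Π_{j∈u} 1/k_j^α` over the `u`-part of the dual lattice. -/
noncomputable def dualSum (N : ℕ) {s : ℕ} (z : Fin s → ℤ) (u : Finset (Fin s)) (α : ℕ) : ℝ :=
  ∑' k : {k : {j // j ∈ u} → ℤ //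
      (∀ j, k j ≠ 0) ∧ ((N : ℤ) ∣ ∑ j ∈ u.attach, k j * z j.1)},
    ∏ j ∈ u.attach, (1 : ℝ) / ((k.1 j : ℝ)) ^ α

/-! ### Functions of positive type -/

/-- The cone of real functions of `(n, m)` generated by the products
`cos (2π a n / N) * cos (2π b m / N)` with nonnegative coefficients, closed under pointwise limits:
the functions of positive type on `(ℤ/N)²` that are even in each variable. -/
inductive PosType (N : ℕ) : (ℕ → ℕ → ℝ) → Prop
  | cos_mul_cos (a b : ℤ) :
      PosType N (fun n m => cos (2 * π * a * n / N) * cos (2 * π * b * m / N))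
  | zero : PosType N (fun _ _ => 0)
  | add (f g : ℕ → ℕ → ℝ) (hf : PosType N f) (hg : PosType N g) :
      PosType N (fun n m => f n m + g n m)
  | smul (c : ℝ) (hc : 0 ≤ c) (f : ℕ → ℕ → ℝ) (hf : PosType N f) :
      PosType N (fun n m => c * f n m)
  | lim (F : ℕ → ℕ → ℕ → ℝ) (hF : ∀ i, PosType N (F i)) (f : ℕ → ℕ → ℝ)
      (hlim : ∀ n m, Filter.Tendsto (fun i => F i n m) Filter.atTop (nhds (f n m))) :
      PosType N f

namespace PosType

variable {N : ℕ}

lemma congr {f g : ℕ → ℕ → ℝ} (hf : PosType N f) (h : ∀ n m, g n m = f n m) : PosType N g := by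
  have : g = f := by
    funext n m
    exact h n m
  rwa [this]

lemma one : PosType N (fun _ _ => 1) :=
  (cos_mul_cos 0 0).congr (by simp)

lemma sum {ι : Type*} (S : Finset ι) (F : ι → ℕ → ℕ → ℝ) (hF : ∀ i ∈ S, PosType N (F i)) :
    PosType N (fun n m => ∑ i ∈ S, F i n m) := by
  classical
  induction S using Finset.induction_on with
  | empty => simpa using zero
  | insert a S ha ih =>
    simp only [Finset.sum_insert ha]
    exact add _ _ (hF a (by simp)) (ih fun i hi => hF i (by simp [hi]))

/-- Products of generators are convex combinations of generators, by the product-to-sum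
formula for the cosine. -/
lemma mul {f g : ℕ → ℕ → ℝ} (hf : PosType N f) (hg : PosType N g) :
    PosType N (fun n m => f n m * g n m) := by
  induction hf with
  | zero => simpa using zero
  | add f₁ f₂ _ _ h₁ h₂ => exact (add _ _ h₁ h₂).congr fun n m => by ring
  | smul c hc f _ h => exact (smul c hc _ h).congr fun n m => by ring
  | lim F _ f hlim h => exact lim _ h _ fun n m => (hlim n m).mul_const _
  | cos_mul_cos a b =>
    induction hg with
    | zero => simpa using zero
    | add f₁ f₂ _ _ h₁ h₂ => exact (add _ _ h₁ h₂).congr fun n m => by ring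
    | smul c hc f _ h => exact (smul c hc _ h).congr fun n m => by ring
    | lim F _ f hlim h => exact lim _ h _ fun n m => (hlim n m).const_mul _
    | cos_mul_cos c d =>
      refine (smul (1 / 4) (by norm_num) _ (add _ _
        (add _ _ (cos_mul_cos (a + c) (b + d)) (cos_mul_cos (a + c) (b - d)))
        (add _ _ (cos_mul_cos (a - c) (b + d)) (cos_mul_cos (a - c) (b - d))))).congr ?_
      intro n m
      have e₁ (x y t : ℝ) : 2 * π * (x + y) * t / N = 2 * π * x * t / N + 2 * π * y * t / N := by
        ring
      have e₂ (x y t : ℝ) : 2 * π * (x - y) * t / N = 2 * π * x * t / N - 2 * π * y * t / N := by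
        ring
      push_cast
      rw [e₁, e₂, e₁, e₂, cos_add, cos_add, cos_sub, cos_sub]
      ring

/-- If `0 ≼ f i ≼ g i` in the order induced by the cone, then `0 ≼ ∏ f i ≼ ∏ g i`. -/
lemma prod_sub_prod {ι : Type*} (S : Finset ι) (f g : ι → ℕ → ℕ → ℝ)
    (hf : ∀ i ∈ S, PosType N (f i)) (hfg : ∀ i ∈ S, PosType N (fun n m => g i n m - f i n m)) :
    PosType N (fun n m => ∏ i ∈ S, f i n m) ∧
      PosType N (fun n m => ∏ i ∈ S, g i n m - ∏ i ∈ S, f i n m) := by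
  classical
  induction S using Finset.induction_on with
  | empty => simpa using ⟨one, zero⟩
  | insert a S ha ih =>
    obtain ⟨h₁, h₂⟩ := ih (fun i hi => hf i (by simp [hi])) (fun i hi => hfg i (by simp [hi]))
    have hfa := hf a (by simp)
    have hga := hfg a (by simp)
    simp only [Finset.prod_insert ha]
    refine ⟨hfa.mul h₁, (add _ _ (hga.mul (add _ _ h₂ h₁)) (hfa.mul h₂)).congr ?_⟩
    intro n m
    ring

end PosType

/-- Orthogonality of the characters of `ℤ/N`. -/
lemma sum_exp_eq (N : ℕ) (hN : 0 < N) (a : ℤ) :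
    ∑ n ∈ Finset.range N, Complex.exp (2 * π * Complex.I * a * n / N)
      = if (N : ℤ) ∣ a then (N : ℂ) else 0 := by
  have hN' : (N : ℂ) ≠ 0 := by exact_mod_cast hN.ne'
  have hpow : ∀ n : ℕ, Complex.exp (2 * π * Complex.I * a * n / N)
      = Complex.exp (2 * π * Complex.I * a / N) ^ n := by
    intro n
    rw [← Complex.exp_nat_mul]
    congr 1
    ring
  have hone : Complex.exp (2 * π * Complex.I * a / N) = 1 ↔ (N : ℤ) ∣ a := by
    rw [Complex.exp_eq_one_iff]
    have hpi : (2 * π * Complex.I : ℂ) ≠ 0 := Complex.two_pi_I_ne_zero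
    constructor
    · rintro ⟨b, hb⟩
      refine ⟨b, ?_⟩
      rw [div_eq_iff hN'] at hb
      have : (2 * π * Complex.I : ℂ) * a = (2 * π * Complex.I) * (N * b) := by
        rw [hb]; ring
      exact_mod_cast mul_left_cancel₀ hpi this
    · rintro ⟨b, rfl⟩
      refine ⟨b, ?_⟩
      push_cast
      field_simp
  simp_rw [hpow]
  split_ifs with h
  · rw [hone.2 h]
    simp
  · rw [geom_sum_eq (fun h' => h (hone.1 h')), ← hpow]
    have : Complex.exp (2 * π * Complex.I * a * N / N) = 1 := by
      rw [Complex.exp_eq_one_iff]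
      exact ⟨a, by field_simp⟩
    rw [this]
    simp

lemma sum_cos_nonneg (N : ℕ) (hN : 0 < N) (a : ℤ) :
    0 ≤ ∑ n ∈ Finset.range N, cos (2 * π * a * n / N) := by
  have h := congrArg Complex.re (sum_exp_eq N hN a)
  rw [Complex.re_sum] at h
  have e : ∀ n : ℕ, (Complex.exp (2 * π * Complex.I * a * n / N)).re
      = cos (2 * π * a * n / N) := by
    intro n
    rw [← Complex.exp_ofReal_mul_I_re]
    congr 2
    push_cast
    ring
  simp_rw [e] at h
  rw [h]
  split_ifs <;> simp

/-- The sum over all `(n, m)` is, up to `N²`, the zeroth Fourier coefficient, hence nonnegative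
on the cone. -/
lemma PosType.sum_nonneg {N : ℕ} (hN : 0 < N) {f : ℕ → ℕ → ℝ} (hf : PosType N f) :
    0 ≤ ∑ n ∈ Finset.range N, ∑ m ∈ Finset.range N, f n m := by
  induction hf with
  | zero => simp
  | add f₁ f₂ _ _ h₁ h₂ =>
    simp only [Finset.sum_add_distrib]
    exact add_nonneg h₁ h₂
  | smul c hc f _ h =>
    simp only [← Finset.mul_sum]
    exact mul_nonneg hc h
  | lim F _ f hlim h =>
    exact ge_of_tendsto' (tendsto_finsetSum _ fun n _ => tendsto_finsetSum _ fun m _ => hlim n m) h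
  | cos_mul_cos a b =>
    rw [← Finset.sum_mul_sum]
    exact mul_nonneg (sum_cos_nonneg N hN a) (sum_cos_nonneg N hN b)

/-! ### Fourier expansion of the symmetrized kernel -/

/-- `∑_{n ≥ 1} cos (2π n x) / n^p`; the term `n = 0` vanishes since `1 / 0 = 0`. -/
noncomputable def cosSum (p : ℕ) (x : ℝ) : ℝ :=
  ∑' n : ℕ, 1 / (n : ℝ) ^ p * cos (2 * π * n * x)

lemma hasSum_cosSum {p : ℕ} (hp : 2 ≤ p) (x : ℝ) :
    HasSum (fun n : ℕ => 1 / (n : ℝ) ^ p * cos (2 * π * n * x)) (cosSum p x) := by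
  refine Summable.hasSum (Summable.of_norm_bounded
    (Real.summable_one_div_nat_pow.2 (by omega : 1 < p)) ?_)
  intro n
  rw [norm_mul, Real.norm_of_nonneg (by positivity)]
  exact mul_le_of_le_one_right (by positivity) (Real.abs_cos_le_one _)

lemma cos_fract (n : ℕ) (t : ℝ) : cos (2 * π * n * Int.fract t) = cos (2 * π * n * t) := by
  have : 2 * π * n * Int.fract t = 2 * π * n * t - ((n * ⌊t⌋ : ℤ) : ℝ) * (2 * π) := by
    rw [Int.fract]
    push_cast
    ring
  rw [this, Real.cos_sub_int_mul_two_pi]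

lemma cosSum_fract (p : ℕ) (t : ℝ) : cosSum p (Int.fract t) = cosSum p t := by
  simp only [cosSum, cos_fract]

lemma bern_eq_bernoulliFun (k : ℕ) (x : ℝ) : bern k x = bernoulliFun k x := by
  rw [bern, bernoulliFun, Polynomial.eval_map_algebraMap]

lemma cosSum_eq_bern {q : ℕ} (hq : q ≠ 0) {x : ℝ} (hx : x ∈ Set.Icc (0 : ℝ) 1) :
    cosSum (2 * q) x
      = (-1 : ℝ) ^ (q + 1) * (2 * π) ^ (2 * q) / 2 / (2 * q).factorial * bern (2 * q) x := by
  rw [bern_eq_bernoulliFun]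
  exact (hasSum_one_div_nat_pow_mul_cos hq hx).tsum_eq

lemma bern_one_sub (k : ℕ) (x : ℝ) : bern k (1 - x) = (-1) ^ k * bern k x := by
  rw [bern_eq_bernoulliFun, bern_eq_bernoulliFun, bernoulliFun_eval_one_sub]

/-- Symmetrization kills the products of odd Bernoulli polynomials. -/
lemma symf_Ksob {α : ℕ} (hαe : Even α) (x y : ℝ) :
    -1 + symf (Ksob α) x y = bern α x * bern α y / (α.factorial : ℝ) ^ 2
      - (bern (2 * α) |x - y| + bern (2 * α) |x + y - 1|) / 2 / (2 * α).factorial := by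
  have hodd (x y : ℝ) : ∑ τ ∈ (Finset.Icc 1 (α - 1)).filter (fun τ => Odd τ),
        bern τ (1 - x) * bern τ y / ((Nat.factorial τ : ℝ)) ^ 2
      = -∑ τ ∈ (Finset.Icc 1 (α - 1)).filter (fun τ => Odd τ),
        bern τ x * bern τ y / ((Nat.factorial τ : ℝ)) ^ 2 := by
    rw [← Finset.sum_neg_distrib]
    refine Finset.sum_congr rfl fun τ hτ => ?_
    rw [bern_one_sub, (Finset.mem_filter.1 hτ).2.neg_one_pow]
    ring
  have e₁ : |1 - x - y| = |x + y - 1| := by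
    rw [← abs_neg]; congr 1; ring
  have e₂ : |x - (1 - y)| = |x + y - 1| := by congr 1; ring
  have e₃ : |1 - x - (1 - y)| = |x - y| := by
    rw [← abs_neg]; congr 1; ring
  have hα (x : ℝ) : bern α (1 - x) = bern α x := by
    rw [bern_one_sub, hαe.neg_one_pow, one_mul]
  simp only [symf, Ksob, hodd, e₁, e₂, e₃, hα]
  ring

/-- The diagonal part of the Fourier expansion of the symmetrized kernel. -/
noncomputable def diagSum (p : ℕ) (x y : ℝ) : ℝ :=
  ∑' n : ℕ, 1 / (n : ℝ) ^ p * (cos (2 * π * n * x) * cos (2 * π * n * y))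

lemma hasSum_diagSum {p : ℕ} (hp : 2 ≤ p) (x y : ℝ) :
    HasSum (fun n : ℕ => 1 / (n : ℝ) ^ p * (cos (2 * π * n * x) * cos (2 * π * n * y)))
      (diagSum p x y) := by
  refine Summable.hasSum (Summable.of_norm_bounded
    (Real.summable_one_div_nat_pow.2 (by omega : 1 < p)) ?_)
  intro n
  rw [norm_mul, Real.norm_of_nonneg (by positivity)]
  refine mul_le_of_le_one_right (by positivity) ?_
  rw [norm_mul]
  exact mul_le_one₀ (Real.abs_cos_le_one _) (norm_nonneg _) (Real.abs_cos_le_one _)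

lemma cosSum_add_cosSum {p : ℕ} (hp : 2 ≤ p) (x y : ℝ) :
    cosSum p |x - y| + cosSum p |x + y - 1| = 2 * diagSum p x y := by
  refine ((hasSum_cosSum hp |x - y|).add (hasSum_cosSum hp |x + y - 1|)).unique ?_
  convert! (hasSum_diagSum hp x y).mul_left 2 using 1
  funext n
  have e (t : ℝ) : cos (2 * π * n * |t|) = cos (2 * π * n * t) := by
    rw [← Real.cos_abs (2 * π * n * t), abs_mul (2 * π * n) t,
      abs_of_nonneg (by positivity : 0 ≤ 2 * π * (n : ℝ))]
  have e₁ : 2 * π * n * (x + y - 1) = 2 * π * n * x + 2 * π * n * y - n * (2 * π) := by ring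
  rw [e, e, e₁, Real.cos_sub_nat_mul_two_pi, mul_sub, cos_sub, cos_add]
  ring

/-- The even Bernoulli polynomials are multiples of cosine series on `[0, 1]`; for even `α` the
signs in `B_α(x) B_α(y)` cancel and the one of `-B_{2α}` is positive. -/
lemma symf_Ksob_eq {α : ℕ} (hα : 2 ≤ α) (hαe : Even α) {x y : ℝ} (hx : x ∈ Set.Icc (0 : ℝ) 1)
    (hy : y ∈ Set.Icc (0 : ℝ) 1) :
    -1 + symf (Ksob α) x y = 1 / (2 * π) ^ (2 * α) *
      (4 * (cosSum α x * cosSum α y) + 2 * diagSum (2 * α) x y) := by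
  rw [symf_Ksob hαe, ← cosSum_add_cosSum (by omega)]
  obtain ⟨hx0, hx1⟩ := hx
  obtain ⟨hy0, hy1⟩ := hy
  have h₁ : |x - y| ∈ Set.Icc (0 : ℝ) 1 := ⟨abs_nonneg _, abs_le.2 ⟨by linarith, by linarith⟩⟩
  have h₂ : |x + y - 1| ∈ Set.Icc (0 : ℝ) 1 :=
    ⟨abs_nonneg _, abs_le.2 ⟨by linarith, by linarith⟩⟩
  rw [cosSum_eq_bern (by omega) h₁, cosSum_eq_bern (by omega) h₂, hαe.add_one.neg_one_pow]
  obtain ⟨q, hq⟩ := hαe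
  obtain rfl : α = 2 * q := by omega
  rw [cosSum_eq_bern (by omega) ⟨hx0, hx1⟩, cosSum_eq_bern (by omega) ⟨hy0, hy1⟩]
  have hs : ((-1 : ℝ) ^ (q + 1)) * (-1 : ℝ) ^ (q + 1) = 1 := by
    rw [← mul_pow]; simp
  have hsplit : (2 * π) ^ (2 * (2 * q)) = (2 * π) ^ (2 * q) * (2 * π) ^ (2 * q) := by
    rw [← pow_add]; congr 1; ring
  have hne : (2 * π) ^ (2 * q) ≠ 0 := by positivity
  rw [hsplit]
  generalize (2 * π) ^ (2 * q) = P at *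
  have hf₁ : ((2 * q).factorial : ℝ) ≠ 0 := by positivity
  have hf₂ : ((2 * (2 * q)).factorial : ℝ) ≠ 0 := by positivity
  generalize (-1 : ℝ) ^ (q + 1) = σ at *
  field_simp
  have hs' : σ ^ 2 = 1 := by rw [sq]; exact hs
  rw [hs']
  ring

/-! ### Positivity of the kernel and of its majorant -/

section Factor

variable {N : ℕ} {p : ℕ}

lemma cos_angle (i : ℕ) (z : ℤ) (n : ℕ) :
    cos (2 * π * i * ((n : ℝ) * z / N)) = cos (2 * π * ((i * z : ℤ) : ℝ) * n / N) := by
  congr 1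
  push_cast
  ring

lemma PosType.term (i k : ℕ) (z : ℤ) :
    PosType N (fun n m => cos (2 * π * i * ((n : ℝ) * z / N)) *
      cos (2 * π * k * ((m : ℝ) * z / N))) :=
  (PosType.cos_mul_cos (i * z) (k * z)).congr fun n m => by rw [cos_angle, cos_angle]

lemma PosType.diagSum (hp : 2 ≤ p) (z : ℤ) :
    PosType N (fun n m => diagSum p ((n : ℝ) * z / N) ((m : ℝ) * z / N)) :=
  PosType.lim _ (fun M => PosType.sum (Finset.range M) _ fun i _ =>
    PosType.smul (1 / (i : ℝ) ^ p) (by positivity) _ (PosType.term i i z)) _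
    fun _ _ => (hasSum_diagSum hp _ _).tendsto_sum_nat

lemma PosType.cosSum_mul_cosSum (hp : 2 ≤ p) (z : ℤ) :
    PosType N (fun n m => cosSum p ((n : ℝ) * z / N) * cosSum p ((m : ℝ) * z / N)) := by
  refine PosType.lim (fun M n m => (∑ i ∈ Finset.range M, 1 / (i : ℝ) ^ p *
      cos (2 * π * i * ((n : ℝ) * z / N))) * (∑ k ∈ Finset.range M, 1 / (k : ℝ) ^ p *
      cos (2 * π * k * ((m : ℝ) * z / N)))) (fun M => ?_) _
    fun n m => (hasSum_cosSum hp _).tendsto_sum_nat.mul (hasSum_cosSum hp _).tendsto_sum_nat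
  refine (PosType.sum (Finset.range M ×ˢ Finset.range M) _ fun i _ =>
    PosType.smul (1 / (i.1 : ℝ) ^ p * (1 / (i.2 : ℝ) ^ p)) (by positivity) _
      (PosType.term i.1 i.2 z)).congr fun n m => ?_
  rw [Finset.sum_mul_sum, ← Finset.sum_product']
  exact Finset.sum_congr rfl fun i _ => by ring

/-- The diagonal sum is the part `i = k` of the double sum
`∑_{i,k} cos (2π i x) cos (2π k y) / (i k)^p`. -/
lemma PosType.cosSum_sub_diagSum (hp : 2 ≤ p) (z : ℤ) :
    PosType N (fun n m => cosSum p ((n : ℝ) * z / N) * cosSum p ((m : ℝ) * z / N)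
      - _root_.diagSum (2 * p) ((n : ℝ) * z / N) ((m : ℝ) * z / N)) := by
  refine PosType.lim (fun M n m => (∑ i ∈ Finset.range M, 1 / (i : ℝ) ^ p *
      cos (2 * π * i * ((n : ℝ) * z / N))) * (∑ k ∈ Finset.range M, 1 / (k : ℝ) ^ p *
      cos (2 * π * k * ((m : ℝ) * z / N))) - ∑ i ∈ Finset.range M, 1 / (i : ℝ) ^ (2 * p) *
      (cos (2 * π * i * ((n : ℝ) * z / N)) * cos (2 * π * i * ((m : ℝ) * z / N))))
    (fun M => ?_) _
    fun n m => ((hasSum_cosSum hp _).tendsto_sum_nat.mul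
      (hasSum_cosSum hp _).tendsto_sum_nat).sub (hasSum_diagSum (by omega) _ _).tendsto_sum_nat
  refine (PosType.sum (Finset.range M) _ fun i _ => PosType.sum ((Finset.range M).erase i) _
    fun k _ => PosType.smul (1 / (i : ℝ) ^ p * (1 / (k : ℝ) ^ p)) (by positivity) _
      (PosType.term i k z)).congr fun n m => ?_
  rw [Finset.sum_mul_sum, ← Finset.sum_sub_distrib]
  refine Finset.sum_congr rfl fun i hi => ?_
  rw [← Finset.add_sum_erase _ _ hi, sub_eq_iff_eq_add, add_comm]
  congr 1
  · exact Finset.sum_congr rfl fun k _ => by ring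
  · rw [mul_comm 2 p, pow_mul, sq]
    ring

end Factor

lemma hasSum_exp {α : ℕ} (hα : 2 ≤ α) (hαe : Even α) (t : ℝ) :
    HasSum (fun k : ℤ => 1 / (k : ℂ) ^ α * Complex.exp (2 * π * Complex.I * k * t))
      ((2 * cosSum α t : ℝ) : ℂ) := by
  have hmem : Int.fract t ∈ Set.Icc (0 : ℝ) 1 := ⟨Int.fract_nonneg t, (Int.fract_lt_one t).le⟩
  have h := hasSum_one_div_pow_mul_fourier_mul_bernoulliFun hα hmem
  convert h using 1
  · funext k
    rw [fourier_coe_apply]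
    congr 1
    rw [Complex.exp_eq_exp_iff_exists_int]
    refine ⟨k * ⌊t⌋, ?_⟩
    rw [Int.fract]
    push_cast
    ring
  · rw [← cosSum_fract]
    obtain ⟨q, hq⟩ := hαe
    obtain rfl : α = 2 * q := by omega
    rw [cosSum_eq_bern (by omega) hmem, bern_eq_bernoulliFun, mul_pow _ Complex.I,
      pow_mul Complex.I, Complex.I_sq]
    push_cast
    ring

/-! ### The dual lattice sum -/

section Dual

variable {N s : ℕ} (z : Fin s → ℤ) (u : Finset (Fin s)) {α : ℕ}

/-- `∏_{j ∈ u} 1 / k_j^α`, which is `0` as soon as some `k_j = 0`. -/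
noncomputable def dualWeight (u : Finset (Fin s)) (α : ℕ) (k : {j // j ∈ u} → ℤ) : ℝ :=
  ∏ j ∈ u.attach, (1 : ℝ) / ((k j : ℝ)) ^ α

lemma dualWeight_nonneg (hαe : Even α) (k : {j // j ∈ u} → ℤ) : 0 ≤ dualWeight u α k :=
  Finset.prod_nonneg fun _ _ => one_div_nonneg.2 (hαe.pow_nonneg _)

lemma summable_dualWeight (hα : 2 ≤ α) (hαe : Even α) : Summable (dualWeight u α) := by
  classical
  have hs : Summable (fun k : ℤ => 1 / (k : ℝ) ^ α) :=
    Real.summable_one_div_int_pow.2 (by omega)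
  have h0 (k : ℤ) : 0 ≤ 1 / (k : ℝ) ^ α := one_div_nonneg.2 (hαe.pow_nonneg _)
  refine summable_of_sum_le (c := ∏ _j : {j // j ∈ u}, ∑' k : ℤ, 1 / (k : ℝ) ^ α)
    (dualWeight_nonneg u hαe) fun S => ?_
  calc ∑ k ∈ S, dualWeight u α k
      ≤ ∑ k ∈ Fintype.piFinset (fun j => S.image (fun k => k j)), dualWeight u α k := by
        refine Finset.sum_le_sum_of_subset_of_nonneg (fun k hk => ?_)
          fun k _ _ => dualWeight_nonneg u hαe k
        exact Fintype.mem_piFinset.2 fun j => Finset.mem_image_of_mem _ hk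
    _ = ∏ j : {j // j ∈ u}, ∑ i ∈ S.image (fun k => k j), 1 / ((i : ℤ) : ℝ) ^ α := by
        rw [Finset.prod_univ_sum]
        rfl
    _ ≤ _ := Finset.prod_le_prod (fun j _ => Finset.sum_nonneg fun k _ => h0 k)
        fun j _ => hs.sum_le_tsum _ fun k _ => h0 k

lemma dualSum_eq_tsum (hα : α ≠ 0) : dualSum N z u α = ∑' k : {j // j ∈ u} → ℤ,
    if (N : ℤ) ∣ ∑ j ∈ u.attach, k j * z j.1 then dualWeight u α k else 0 := by
  classical
  have h := tsum_subtype {k : {j // j ∈ u} → ℤ |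
    (∀ j, k j ≠ 0) ∧ ((N : ℤ) ∣ ∑ j ∈ u.attach, k j * z j.1)} (dualWeight u α)
  refine h.trans (tsum_congr fun k => ?_)
  by_cases hd : (N : ℤ) ∣ ∑ j ∈ u.attach, k j * z j.1
  · by_cases hk : ∀ j, k j ≠ 0
    · simp [Set.indicator, hd, hk]
    · obtain ⟨j, hj⟩ := not_forall_not.1 hk
      have hw : dualWeight u α k = 0 :=
        Finset.prod_eq_zero (Finset.mem_attach u j) (by simp [hj, hα])
      rw [if_pos hd, hw, Set.indicator_apply_eq_zero]
      exact fun _ => hw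
  · simp [Set.indicator, hd]

/-- The lattice-rule average of the truncated product: by orthogonality of characters only the
frequencies of the dual lattice survive. -/
lemma average_truncated (hN : 0 < N) (T : Finset ℤ) :
    1 / (N : ℂ) * ∑ n ∈ Finset.range N, ∏ j ∈ u.attach, ∑ k ∈ T,
      1 / (k : ℂ) ^ α * Complex.exp (2 * π * Complex.I * k * (((n : ℝ) * z j.1 / N : ℝ) : ℂ))
    = ((∑ k ∈ Fintype.piFinset (fun _ : {j // j ∈ u} => T),
        if (N : ℤ) ∣ ∑ j ∈ u.attach, k j * z j.1 then dualWeight u α k else 0 : ℝ) : ℂ) := by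
  classical
  have hN' : (N : ℂ) ≠ 0 := by exact_mod_cast hN.ne'
  have hprod (n : ℕ) : ∏ j ∈ u.attach, ∑ k ∈ T,
      1 / (k : ℂ) ^ α * Complex.exp (2 * π * Complex.I * k * (((n : ℝ) * z j.1 / N : ℝ) : ℂ))
      = ∑ k ∈ Fintype.piFinset (fun _ : {j // j ∈ u} => T), (dualWeight u α k : ℂ) *
        Complex.exp (2 * π * Complex.I * (∑ j ∈ u.attach, k j * z j.1 : ℤ) * n / N) := by
    rw [← Finset.univ_eq_attach, Finset.prod_univ_sum]
    refine Finset.sum_congr rfl fun k _ => ?_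
    rw [Finset.prod_mul_distrib, ← Complex.exp_sum, dualWeight, Finset.univ_eq_attach]
    push_cast
    congr 2
    rw [Finset.mul_sum, Finset.sum_mul, Finset.sum_div]
    exact Finset.sum_congr rfl fun j _ => by ring
  simp_rw [hprod]
  rw [Finset.sum_comm]
  simp_rw [← Finset.mul_sum]
  simp_rw [sum_exp_eq N hN]
  rw [Finset.mul_sum]
  push_cast
  refine Finset.sum_congr rfl fun k _ => ?_
  split_ifs
  · field_simp
  · simp

/-- The average over the lattice points of the product of the one-dimensional Fourier series is
at most the dual lattice sum (in fact they are equal). -/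
lemma average_mem_Icc (hN : 0 < N) (hα : 2 ≤ α) (hαe : Even α) :
    1 / (N : ℝ) * ∑ n ∈ Finset.range N, ∏ j ∈ u, 2 * cosSum α ((n : ℝ) * z j / N)
      ∈ Set.Icc 0 (dualSum N z u α) := by
  classical
  have hlim : Filter.Tendsto (fun T : Finset ℤ =>
      ((∑ k ∈ Fintype.piFinset (fun _ : {j // j ∈ u} => T),
        if (N : ℤ) ∣ ∑ j ∈ u.attach, k j * z j.1 then dualWeight u α k else 0 : ℝ) : ℂ))
      Filter.atTop (nhds ((1 / (N : ℝ) * ∑ n ∈ Finset.range N,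
        ∏ j ∈ u, 2 * cosSum α ((n : ℝ) * z j / N) : ℝ) : ℂ)) := by
    simp_rw [← average_truncated z u hN]
    have he : ((1 / (N : ℝ) * ∑ n ∈ Finset.range N,
        ∏ j ∈ u, 2 * cosSum α ((n : ℝ) * z j / N) : ℝ) : ℂ)
        = 1 / (N : ℂ) * ∑ n ∈ Finset.range N,
          ∏ j ∈ u.attach, ((2 * cosSum α ((n : ℝ) * z j.1 / N) : ℝ) : ℂ) := by
      simp_rw [fun n : ℕ => Finset.prod_attach u
        (fun j => ((2 * cosSum α ((n : ℝ) * z j / N) : ℝ) : ℂ))]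
      push_cast
      rfl
    rw [he]
    exact (tendsto_finsetSum _ fun n _ => tendsto_finsetProd _ fun j _ =>
      hasSum_exp hα hαe _).const_mul _
  have hlim' := (Complex.continuous_re.tendsto _).comp hlim
  simp only [Function.comp_def, Complex.ofReal_re] at hlim'
  have hnn (k : {j // j ∈ u} → ℤ) :
      0 ≤ if (N : ℤ) ∣ ∑ j ∈ u.attach, k j * z j.1 then dualWeight u α k else 0 := by
    split_ifs
    exacts [dualWeight_nonneg u hαe k, le_rfl]
  have hsum : Summable (fun k : {j // j ∈ u} → ℤ =>
      if (N : ℤ) ∣ ∑ j ∈ u.attach, k j * z j.1 then dualWeight u α k else 0) := by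
    refine Summable.of_nonneg_of_le hnn (fun k => ?_) (summable_dualWeight u hα hαe)
    split_ifs
    exacts [le_rfl, dualWeight_nonneg u hαe k]
  refine ⟨ge_of_tendsto' hlim' fun T => Finset.sum_nonneg fun k _ => hnn k,
    le_of_tendsto' hlim' fun T => ?_⟩
  rw [dualSum_eq_tsum z u (by omega)]
  exact hsum.sum_le_tsum _ fun k _ => hnn k

/-! ### The bound for each subset -/

/-- The bound for a single subset `u`. The factor `3 / 2` appears because the pairs of frequencies
`(k, l)` with `|k| = |l|` enter the Fourier expansion of each symmetrized kernel with weight `3 / 2`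
and all other pairs with weight `1`. -/
lemma subset_bound (hN : 0 < N) (hα : 2 ≤ α) (hαe : Even α) :
    1 / (N : ℝ) ^ 2 * ∑ n ∈ Finset.range N, ∑ m ∈ Finset.range N,
      ∏ j ∈ u, (-1 + symf (Ksob α) (Int.fract ((n : ℝ) * (z j : ℝ) / (N : ℝ)))
                (Int.fract ((m : ℝ) * (z j : ℝ) / (N : ℝ))))
    ≤ (3 / (2 ^ (2 * α + 1) * π ^ (2 * α))) ^ u.card * (dualSum N z u α) ^ 2 := by
  set c : ℝ := 3 / (2 ^ (2 * α + 1) * π ^ (2 * α)) with hc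
  have hc' : c = 1 / (2 * π) ^ (2 * α) * (3 / 2) := by
    rw [hc, mul_pow, pow_succ]
    field_simp
  have hc0 : 0 ≤ c := by positivity
  have hP : (0 : ℝ) ≤ 1 / (2 * π) ^ (2 * α) := by positivity
  have hmem (t : ℝ) : Int.fract t ∈ Set.Icc (0 : ℝ) 1 :=
    ⟨Int.fract_nonneg t, (Int.fract_lt_one t).le⟩
  have hdiag (x y : ℝ) : diagSum (2 * α) (Int.fract x) (Int.fract y) = diagSum (2 * α) x y := by
    simp only [diagSum, cos_fract]
  have hpos := (PosType.prod_sub_prod (N := N) u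
    (fun j n m => -1 + symf (Ksob α) (Int.fract ((n : ℝ) * (z j : ℝ) / (N : ℝ)))
                (Int.fract ((m : ℝ) * (z j : ℝ) / (N : ℝ))))
    (fun j n m => c * ((2 * cosSum α ((n : ℝ) * z j / N)) * (2 * cosSum α ((m : ℝ) * z j / N))))
    (fun j _ => (PosType.smul _ hP _ (PosType.add _ _
        (PosType.smul 4 (by norm_num) _ (PosType.cosSum_mul_cosSum hα (z j)))
        (PosType.smul 2 (by norm_num) _ (PosType.diagSum (p := 2 * α) (by omega) (z j))))).congr
      fun n m => by
        rw [symf_Ksob_eq hα hαe (hmem _) (hmem _), cosSum_fract, cosSum_fract, hdiag])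
    (fun j _ => (PosType.smul _ hP _
        (PosType.smul 2 (by norm_num) _ (PosType.cosSum_sub_diagSum hα (z j)))).congr
      fun n m => by
        rw [symf_Ksob_eq hα hαe (hmem _) (hmem _), cosSum_fract, cosSum_fract, hdiag, hc']
        ring)).2.sum_nonneg hN
  simp only [Finset.sum_sub_distrib, sub_nonneg] at hpos
  obtain ⟨ha0, ha1⟩ := average_mem_Icc z u hN hα hαe
  calc _ ≤ _ := mul_le_mul_of_nonneg_left hpos (by positivity)
    _ = c ^ u.card * (1 / (N : ℝ) * ∑ n ∈ Finset.range N,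
          ∏ j ∈ u, 2 * cosSum α ((n : ℝ) * z j / N)) ^ 2 := by
        rw [mul_pow, sq (∑ n ∈ Finset.range N, _), Finset.sum_mul_sum]
        simp_rw [Finset.prod_mul_distrib, Finset.prod_const, ← Finset.mul_sum]
        ring
    _ ≤ _ := by gcongr

lemma dualSum_nonneg (hαe : Even α) : 0 ≤ dualSum N z u α :=
  tsum_nonneg fun _ => dualWeight_nonneg u hαe _

end Dual

theorem stmt1 (α : ℕ) (hα : 2 ≤ α) (hαe : Even α) (N s : ℕ) (hN : 0 < N) (hs : 0 < s)
    (z : Fin s → ℤ) (hz : ∀ j, 1 ≤ z j ∧ z j ≤ (N : ℤ) - 1)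
    (γ : Finset (Fin s) → ℝ) (hγ : ∀ u : Finset (Fin s), u.Nonempty → 0 ≤ γ u) :
    (∑ u ∈ Finset.univ.filter (fun u : Finset (Fin s) => u.Nonempty),
        γ u * (1 / (N : ℝ) ^ 2) *
          ∑ n ∈ Finset.range N, ∑ m ∈ Finset.range N,
            ∏ j ∈ u,
              (-1 + symf (Ksob α) (Int.fract ((n : ℝ) * (z j : ℝ) / (N : ℝ)))
                (Int.fract ((m : ℝ) * (z j : ℝ) / (N : ℝ))))
      ≤ ∑ u ∈ Finset.univ.filter (fun u : Finset (Fin s) => u.Nonempty),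
          (γ u * (3 / (2 ^ (2 * α + 1) * π ^ (2 * α))) ^ u.card) * (dualSum N z u α) ^ 2)
    ∧
    (∑ u ∈ Finset.univ.filter (fun u : Finset (Fin s) => u.Nonempty),
        (γ u * (3 / (2 ^ (2 * α + 1) * π ^ (2 * α))) ^ u.card) * (dualSum N z u α) ^ 2
      ≤ (∑ u ∈ Finset.univ.filter (fun u : Finset (Fin s) => u.Nonempty),
          Real.sqrt (γ u * (3 / (2 ^ (2 * α + 1) * π ^ (2 * α))) ^ u.card) * dualSum N z u α) ^ 2) := by
  constructor
  · refine Finset.sum_le_sum fun u hu => ?_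
    rw [mul_assoc, mul_assoc]
    exact mul_le_mul_of_nonneg_left (subset_bound z u hN hα hαe)
      (hγ u (Finset.mem_filter.1 hu).2)
  · have hw : ∀ u ∈ Finset.univ.filter (fun u : Finset (Fin s) => u.Nonempty),
        0 ≤ γ u * (3 / (2 ^ (2 * α + 1) * π ^ (2 * α))) ^ u.card := fun u hu =>
      mul_nonneg (hγ u (Finset.mem_filter.1 hu).2) (by positivity)
    refine le_trans (le_of_eq ?_) (Finset.sum_sq_le_sq_sum_of_nonneg fun u _ =>
      mul_nonneg (Real.sqrt_nonneg _) (dualSum_nonneg z u hαe))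
    refine Finset.sum_congr rfl fun u hu => ?_
    rw [mul_pow, Real.sq_sqrt (hw u hu)]
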